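/- For the cyclic group G = Z_p (p prime) with trivial twist, the Verlinde ring of the Drinfeld double has primaries (a,b) ∈ Z_p × Z_p with fusion (a,b)(a',b') = (a+a', b+b'), S-matrix S_{(a,b),(a',b')} = (1/p) exp(2πi(ab'+a'b)/p) and T_{(a,b),(a,b)} = exp(2πi ab/p); there are exactly 2p+2 modular invariants: the 2p−2 automorphism invariants Z^{(ℓ)}: (a,b) ↦ (ℓa, ℓ^{-1}b) and Z'^{(ℓ)}: (a,b) ↦ (ℓb, ℓ^{-1}a) for ℓ ∈ Z_p^×, together with the four invariants Z^{m,n} (m,n ∈ {0,1}) with Z^{m,n}_{(a p^m, b p^n),(a' p^n, b' p^m)} = 1. -/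

import Mathlib

/-!
STATEMENT 8: classification of the modular invariants of the (untwisted)
Drinfeld double of the cyclic group `Z_p`, `p` an odd prime: there are exactly
`2p+2` of them.
-/

open scoped BigOperators
open Complex

noncomputable section

/-- `e_p(a) = exp(2 π i a / p)` for `a ∈ Z_p`. -/
def ep (p : ℕ) (a : ZMod p) : ℂ :=
  Complex.exp (2 * Real.pi * Complex.I * a.val / p)

/-- The S-matrix of the double of `Z_p`:
`S_{(a,b),(a',b')} = (1/p) exp(2 π i (a b' + a' b)/p)`. -/
def Sp (p : ℕ) : Matrix (ZMod p × ZMod p) (ZMod p × ZMod p) ℂ :=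
  fun x y => (p : ℂ)⁻¹ * ep p (x.1 * y.2 + y.1 * x.2)

open scoped Classical in
/-- The T-matrix of the double of `Z_p`: diagonal with
`T_{(a,b),(a,b)} = exp(2 π i a b / p)`. -/
def Tp (p : ℕ) : Matrix (ZMod p × ZMod p) (ZMod p × ZMod p) ℂ :=
  fun x y => if x = y then ep p (x.1 * x.2) else 0

/-- A modular invariant for the double of `Z_p`: a nonnegative-integer matrix
commuting with `S` and `T` and normalized at the vacuum. -/
def IsModInvP (p : ℕ) [NeZero p] (Z : ZMod p × ZMod p → ZMod p × ZMod p → ℕ) : Prop :=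
  (Matrix.of fun x y => (Z x y : ℂ)) * Sp p = Sp p * (Matrix.of fun x y => (Z x y : ℂ)) ∧
  (Matrix.of fun x y => (Z x y : ℂ)) * Tp p = Tp p * (Matrix.of fun x y => (Z x y : ℂ)) ∧
  Z (0, 0) (0, 0) = 1

open scoped Classical in
/-- The automorphism invariant `Z^{(ℓ)} : (a,b) ↦ (ℓ a, ℓ⁻¹ b)`. -/
def ZautP (p : ℕ) (ℓ : (ZMod p)ˣ) : ZMod p × ZMod p → ZMod p × ZMod p → ℕ :=
  fun x y => if y = ((ℓ : ZMod p) * x.1, ((ℓ⁻¹ : (ZMod p)ˣ) : ZMod p) * x.2) then 1 else 0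

open scoped Classical in
/-- The automorphism invariant `Z'^{(ℓ)} : (a,b) ↦ (ℓ b, ℓ⁻¹ a)`. -/
def ZautP' (p : ℕ) (ℓ : (ZMod p)ˣ) : ZMod p × ZMod p → ZMod p × ZMod p → ℕ :=
  fun x y => if y = ((ℓ : ZMod p) * x.2, ((ℓ⁻¹ : (ZMod p)ˣ) : ZMod p) * x.1) then 1 else 0

open scoped Classical in
/-- The four invariants `Z^{m,n}`, `m,n ∈ {0,1}`, supported on the pairs
`((a p^m, b p^{1-m}), (a' p^n, b' p^{1-n}))` for `a,b,a',b' ∈ Z_p` (in `Z_p`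
one has `p^0 = 1` and `p^1 = 0`, so e.g. `Z^{0,1}` is supported on rows
`(a, 0)` and columns `(0, b')`, with all those entries equal to `1`). -/
def ZblockP (p : ℕ) (m n : Fin 2) : ZMod p × ZMod p → ZMod p × ZMod p → ℕ :=
  fun x y =>
    if ((if m = 0 then x.2 = 0 else x.1 = 0) ∧ (if n = 0 then y.2 = 0 else y.1 = 0))
    then 1 else 0

lemma ep_eq (p : ℕ) [NeZero p] (a : ZMod p) : ep p a = ZMod.stdAddChar a := by
  rw [ZMod.stdAddChar_apply, ZMod.toCircle_apply]; rfl

lemma ep_inj (p : ℕ) [NeZero p] {a b : ZMod p} (h : ep p a = ep p b) : a = b := by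
  rw [ep_eq, ep_eq] at h
  exact ZMod.injective_stdAddChar h

lemma ep_add (p : ℕ) [NeZero p] (a b : ZMod p) : ep p (a + b) = ep p a * ep p b := by
  simp only [ep_eq, AddChar.map_add_eq_mul]

lemma ep_zero (p : ℕ) [NeZero p] : ep p 0 = 1 := by
  simp only [ep_eq, AddChar.map_zero_eq_one]

lemma ep_norm (p : ℕ) [NeZero p] (a : ZMod p) : ‖ep p a‖ = 1 := by
  rw [ep_eq, ZMod.stdAddChar_apply]; exact Circle.norm_coe _

lemma ep_sum (p : ℕ) [Fact p.Prime] (b : ZMod p) :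
    ∑ x : ZMod p, ep p (x * b) = if b = 0 then (p : ℂ) else 0 := by
  have h := AddChar.sum_mulShift b (ZMod.isPrimitive_stdAddChar p)
  simp only [ep_eq, h, ZMod.card]
  split_ifs <;> simp

lemma ep_sum' (p : ℕ) [Fact p.Prime] (b : ZMod p) :
    ∑ x : ZMod p, ep p (b * x) = if b = 0 then (p : ℂ) else 0 := by
  simp only [← ep_sum p b, mul_comm]

/-- the inverse of the S-matrix -/
def Spinv (p : ℕ) : Matrix (ZMod p × ZMod p) (ZMod p × ZMod p) ℂ :=
  fun x y => (p : ℂ)⁻¹ * ep p (-(x.1 * y.2 + y.1 * x.2))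

lemma Sp_mul_inv (p : ℕ) [Fact p.Prime] : Sp p * Spinv p = 1 := by
  have hp0 : (p : ℂ) ≠ 0 := by exact_mod_cast (Fact.out : p.Prime).ne_zero
  ext x y
  rw [Matrix.mul_apply, Fintype.sum_prod_type]
  have : ∀ c d : ZMod p, Sp p x (c, d) * Spinv p (c, d) y
      = (p : ℂ)⁻¹ * (p : ℂ)⁻¹ * (ep p (c * (x.2 - y.2)) * ep p (d * (x.1 - y.1))) := by
    intro c d
    simp only [Sp, Spinv]
    rw [mul_mul_mul_comm, ← ep_add, ← ep_add]
    congr 2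
    ring
  simp only [this, ← Finset.mul_sum, ← Finset.sum_mul, ep_sum, sub_eq_zero, Matrix.one_apply,
    Prod.ext_iff]
  by_cases h1 : x.1 = y.1 <;> by_cases h2 : x.2 = y.2 <;> simp [h1, h2]
  field_simp

lemma fourier_inv (p : ℕ) [Fact p.Prime] (Z : ZMod p × ZMod p → ZMod p × ZMod p → ℕ)
    (h : (Matrix.of fun x y => (Z x y : ℂ)) * Sp p = Sp p * (Matrix.of fun x y => (Z x y : ℂ)))
    (x y : ZMod p × ZMod p) :
    (p : ℂ) ^ 2 * Z x y = ∑ w : (ZMod p × ZMod p) × (ZMod p × ZMod p),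
      ep p (x.1 * w.1.2 + w.1.1 * x.2 - (w.2.1 * y.2 + y.1 * w.2.2)) * Z w.1 w.2 := by
  have hp0 : (p : ℂ) ≠ 0 := by exact_mod_cast (Fact.out : p.Prime).ne_zero
  have h2 : (Matrix.of fun x y => (Z x y : ℂ))
      = Sp p * (Matrix.of fun x y => (Z x y : ℂ)) * Spinv p := by
    rw [← h, Matrix.mul_assoc, Sp_mul_inv, Matrix.mul_one]
  have h3 := congrFun (congrFun h2 x) y
  rw [Matrix.mul_apply] at h3
  simp only [Matrix.mul_apply, Matrix.of_apply, Finset.sum_mul] at h3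
  rw [h3, Finset.sum_comm, ← Fintype.sum_prod_type', Finset.mul_sum]
  refine Finset.sum_congr rfl fun w _ => ?_
  rw [sub_eq_add_neg, ep_add]
  simp only [Sp, Spinv]
  field_simp

lemma key (p : ℕ) [Fact p.Prime] (Z : ZMod p × ZMod p → ZMod p × ZMod p → ℕ)
    (hS : (Matrix.of fun x y => (Z x y : ℂ)) * Sp p = Sp p * (Matrix.of fun x y => (Z x y : ℂ)))
    (h0 : Z (0, 0) (0, 0) = 1) :
    (∀ x y, Z x y ≤ 1) ∧
    (∑ w : (ZMod p × ZMod p) × (ZMod p × ZMod p), Z w.1 w.2 = p ^ 2) ∧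
    (∀ x y, Z x y = 1 ↔ ∀ w : (ZMod p × ZMod p) × (ZMod p × ZMod p), Z w.1 w.2 ≠ 0 →
      x.1 * w.1.2 + w.1.1 * x.2 - (w.2.1 * y.2 + y.1 * w.2.2) = 0) := by
  have hp0 : (p : ℝ) ^ 2 > 0 := by
    have := (Fact.out : p.Prime).pos
    positivity
  have hF := fourier_inv p Z hS
  have hsum : ∑ w : (ZMod p × ZMod p) × (ZMod p × ZMod p), Z w.1 w.2 = p ^ 2 := by
    have := hF (0, 0) (0, 0)
    simp only [h0, zero_mul, mul_zero, add_zero, sub_zero, ep_zero, one_mul, Nat.cast_one,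
      mul_one] at this
    exact_mod_cast this.symm
  have hsumR : ∑ w : (ZMod p × ZMod p) × (ZMod p × ZMod p), (Z w.1 w.2 : ℝ) = (p : ℝ) ^ 2 := by
    exact_mod_cast hsum
  have hR : ∀ x y, (p : ℝ) ^ 2 * Z x y = ∑ w : (ZMod p × ZMod p) × (ZMod p × ZMod p),
      (ep p (x.1 * w.1.2 + w.1.1 * x.2 - (w.2.1 * y.2 + y.1 * w.2.2))).re * Z w.1 w.2 := by
    intro x y
    have h := congrArg Complex.re (hF x y)
    rw [Complex.re_sum] at h
    have e : ((p : ℂ) ^ 2 * Z x y) = (((p : ℝ) ^ 2 * Z x y : ℝ) : ℂ) := by push_cast; rfl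
    rw [e, Complex.ofReal_re] at h
    rw [h]
    refine Finset.sum_congr rfl fun w _ => ?_
    rw [← Complex.ofReal_natCast, Complex.re_mul_ofReal]
  have hre : ∀ a, (ep p a).re ≤ 1 := fun a => (Complex.re_le_norm _).trans (ep_norm p a).le
  have hterm : ∀ x y : ZMod p × ZMod p, ∀ w : (ZMod p × ZMod p) × (ZMod p × ZMod p),
      (ep p (x.1 * w.1.2 + w.1.1 * x.2 - (w.2.1 * y.2 + y.1 * w.2.2))).re * Z w.1 w.2
        ≤ (Z w.1 w.2 : ℝ) := fun x y w =>
    mul_le_of_le_one_left (Nat.cast_nonneg _) (hre _)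
  refine ⟨fun x y => ?_, hsum, fun x y => ⟨fun h w hw => ?_, fun h => ?_⟩⟩
  · have h1 := Finset.sum_le_sum fun w (_ : w ∈ Finset.univ) => hterm x y w
    rw [← hR, hsumR] at h1
    have : (Z x y : ℝ) ≤ 1 := by
      by_contra hc
      push Not at hc
      nlinarith
    exact_mod_cast this
  · have h1 := hR x y
    rw [h, Nat.cast_one, mul_one, ← hsumR] at h1
    have h2 := (Finset.sum_eq_sum_iff_of_le fun w _ => hterm x y w).1 h1.symm w (Finset.mem_univ _)
    have hw' : (Z w.1 w.2 : ℝ) ≠ 0 := by exact_mod_cast hw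
    have h3 := mul_right_cancel₀ hw' (h2.trans (one_mul _).symm)
    apply ep_inj p
    rw [ep_zero]
    have h4 := ep_norm p (x.1 * w.1.2 + w.1.1 * x.2 - (w.2.1 * y.2 + y.1 * w.2.2))
    have h5 := Complex.sq_norm_sub_sq_re
      (ep p (x.1 * w.1.2 + w.1.1 * x.2 - (w.2.1 * y.2 + y.1 * w.2.2)))
    rw [h3, h4] at h5
    apply Complex.ext
    · exact h3
    · have : (ep p (x.1 * w.1.2 + w.1.1 * x.2 - (w.2.1 * y.2 + y.1 * w.2.2))).im ^ 2 = 0 := by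
        rw [← h5]; norm_num
      simpa using this
  · have h1 := hR x y
    have h2 : (p : ℝ) ^ 2 * Z x y = (p : ℝ) ^ 2 * 1 := by
      rw [h1, mul_one, ← hsumR]
      refine Finset.sum_congr rfl fun w _ => ?_
      by_cases hw : Z w.1 w.2 = 0
      · simp [hw]
      · rw [h w hw, ep_zero]; simp
    exact_mod_cast mul_left_cancel₀ hp0.ne' h2

lemma keyT (p : ℕ) [Fact p.Prime] (Z : ZMod p × ZMod p → ZMod p × ZMod p → ℕ) :
    ((Matrix.of fun x y => (Z x y : ℂ)) * Tp p = Tp p * (Matrix.of fun x y => (Z x y : ℂ))) ↔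
    ∀ x y, Z x y ≠ 0 → x.1 * x.2 = y.1 * y.2 := by
  have e : ∀ x y, ((Matrix.of fun x y => (Z x y : ℂ)) * Tp p) x y = Z x y * ep p (y.1 * y.2) := by
    intro x y
    simp [Matrix.mul_apply, Tp]
  have e' : ∀ x y, (Tp p * (Matrix.of fun x y => (Z x y : ℂ))) x y
      = ep p (x.1 * x.2) * Z x y := by
    intro x y
    simp [Matrix.mul_apply, Tp]
  constructor
  · intro h x y hxy
    have h1 := congrFun (congrFun h x) y
    rw [e, e', mul_comm] at h1
    exact (ep_inj p (mul_right_cancel₀ (by exact_mod_cast hxy) h1)).symm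
  · intro h
    ext x y
    rw [e, e', mul_comm]
    by_cases hxy : Z x y = 0
    · simp [hxy]
    · rw [h x y hxy]

/-- Classification of the self-dual isotropic subspaces. -/
lemma classify (p : ℕ) [Fact p.Prime] (Z : ZMod p × ZMod p → ZMod p × ZMod p → ℕ)
    (h1 : ∀ x y, Z x y ≤ 1)
    (hsum : ∑ w : (ZMod p × ZMod p) × (ZMod p × ZMod p), Z w.1 w.2 = p ^ 2)
    (hd : ∀ x y, Z x y = 1 ↔ ∀ w : (ZMod p × ZMod p) × (ZMod p × ZMod p), Z w.1 w.2 ≠ 0 →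
      x.1 * w.1.2 + w.1.1 * x.2 - (w.2.1 * y.2 + y.1 * w.2.2) = 0)
    (hq : ∀ x y, Z x y ≠ 0 → x.1 * x.2 = y.1 * y.2) :
    (∃ ℓ : (ZMod p)ˣ, Z = ZautP p ℓ ∨ Z = ZautP' p ℓ) ∨ (∃ m n : Fin 2, Z = ZblockP p m n) := by
  classical
  have hz1 : ∀ x y, Z x y ≠ 0 ↔ Z x y = 1 := fun x y => by have := h1 x y; omega
  have hB : ∀ a b c d a' b' c' d', Z (a, b) (c, d) = 1 → Z (a', b') (c', d') = 1 →
      a * b' + a' * b = c * d' + c' * d := by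
    intro a b c d a' b' c' d' h h'
    have := (hd (a, b) (c, d)).1 h ((a', b'), (c', d')) ((hz1 _ _).2 h')
    simp only at this
    linear_combination this
  have hQ : ∀ a b c d, Z (a, b) (c, d) = 1 → a * b = c * d :=
    fun a b c d h => hq (a, b) (c, d) ((hz1 _ _).2 h)
  have hD : ∀ a b c d, (∀ a' b' c' d', Z (a', b') (c', d') = 1 →
      a * b' + a' * b = c * d' + c' * d) → Z (a, b) (c, d) = 1 := by
    intro a b c d h
    refine (hd _ _).2 fun w hw => ?_
    have := h w.1.1 w.1.2 w.2.1 w.2.2 ((hz1 _ _).1 hw)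
    simp only
    linear_combination this
  have hlin : ∀ r s a b c d a' b' c' d', Z (a, b) (c, d) = 1 → Z (a', b') (c', d') = 1 →
      Z (r * a + s * a', r * b + s * b') (r * c + s * c', r * d + s * d') = 1 := by
    intro r s a b c d a' b' c' d' h h'
    refine hD _ _ _ _ fun a'' b'' c'' d'' h'' => ?_
    linear_combination r * hB _ _ _ _ _ _ _ _ h h'' + s * hB _ _ _ _ _ _ _ _ h' h''
  have hext : ∀ W : ZMod p × ZMod p → ZMod p × ZMod p → ℕ, (∀ x y, W x y ≤ 1) →
      (∀ a b c d, Z (a, b) (c, d) = 1 ↔ W (a, b) (c, d) = 1) → Z = W := by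
    intro W hW h
    funext x y
    have a1 := h1 x y
    have a2 := hW x y
    have a3 : Z x y = 1 ↔ W x y = 1 := h x.1 x.2 y.1 y.2
    omega
  have hbl : ∀ m n x y, ZblockP p m n x y ≤ 1 := by
    intro m n x y; unfold ZblockP; split_ifs <;> simp
  by_cases hK : ∃ c d, (c ≠ 0 ∨ d ≠ 0) ∧ Z (0, 0) (c, d) = 1
  · right
    obtain ⟨c, d, hcd, hZ⟩ := hK
    have hcd0 : c * d = 0 := by have := hQ _ _ _ _ hZ; simpa using this.symm
    -- either second or first coordinate of the column vanishes
    have hcol : (∀ a' b' c' d', Z (a', b') (c', d') = 1 → d' = 0) ∨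
        (∀ a' b' c' d', Z (a', b') (c', d') = 1 → c' = 0) := by
      rcases mul_eq_zero.1 hcd0 with hc | hc
      · right
        intro a' b' c' d' h'
        have := hB _ _ _ _ _ _ _ _ hZ h'
        simp [hc] at this
        tauto
      · left
        intro a' b' c' d' h'
        have := hB _ _ _ _ _ _ _ _ hZ h'
        simp [hc] at this
        tauto
    have hab : ∀ a' b' c' d', Z (a', b') (c', d') = 1 → a' * b' = 0 := by
      intro a' b' c' d' h'
      rw [hQ _ _ _ _ h']
      rcases hcol with h | h <;> simp [h _ _ _ _ h']
    have hpol : ∀ a b c d a' b' c' d', Z (a, b) (c, d) = 1 → Z (a', b') (c', d') = 1 →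
        a * b' + a' * b = 0 := by
      intro a b c d a' b' c' d' h h'
      rw [hB _ _ _ _ _ _ _ _ h h']
      rcases hcol with k | k <;> simp [k _ _ _ _ h, k _ _ _ _ h']
    have hrow : (∀ a' b' c' d', Z (a', b') (c', d') = 1 → b' = 0) ∨
        (∀ a' b' c' d', Z (a', b') (c', d') = 1 → a' = 0) := by
      by_cases hh : ∀ a' b' c' d', Z (a', b') (c', d') = 1 → a' = 0
      · exact Or.inr hh
      · left
        push Not at hh
        obtain ⟨a, b, c, d, h, ha⟩ := hh
        have hb : b = 0 := by
          have := hab _ _ _ _ h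
          simpa [ha] using this
        intro a' b' c' d' h'
        have := hpol _ _ _ _ _ _ _ _ h h'
        simpa [hb, ha] using this
    rcases hrow with hr | hr <;> rcases hcol with hc | hc
    · refine ⟨0, 0, hext _ (hbl _ _) fun a b c d => ?_⟩
      simp only [ZblockP]
      constructor
      · intro h; simp [hr _ _ _ _ h, hc _ _ _ _ h]
      · intro h
        have hh : b = 0 ∧ d = 0 := by simpa using h
        refine hD _ _ _ _ fun a' b' c' d' h' => ?_
        simp [hr _ _ _ _ h', hc _ _ _ _ h', hh]
    · refine ⟨0, 1, hext _ (hbl _ _) fun a b c d => ?_⟩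
      simp only [ZblockP]
      constructor
      · intro h; simp [hr _ _ _ _ h, hc _ _ _ _ h]
      · intro h
        have hh : b = 0 ∧ c = 0 := by simpa using h
        refine hD _ _ _ _ fun a' b' c' d' h' => ?_
        simp [hr _ _ _ _ h', hc _ _ _ _ h', hh]
    · refine ⟨1, 0, hext _ (hbl _ _) fun a b c d => ?_⟩
      simp only [ZblockP]
      constructor
      · intro h; simp [hr _ _ _ _ h, hc _ _ _ _ h]
      · intro h
        have hh : a = 0 ∧ d = 0 := by simpa using h
        refine hD _ _ _ _ fun a' b' c' d' h' => ?_
        simp [hr _ _ _ _ h', hc _ _ _ _ h', hh]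
    · refine ⟨1, 1, hext _ (hbl _ _) fun a b c d => ?_⟩
      simp only [ZblockP]
      constructor
      · intro h; simp [hr _ _ _ _ h, hc _ _ _ _ h]
      · intro h
        have hh : a = 0 ∧ c = 0 := by simpa using h
        refine hD _ _ _ _ fun a' b' c' d' h' => ?_
        simp [hr _ _ _ _ h', hc _ _ _ _ h', hh]
  · left
    have hK' : ∀ c d, Z (0, 0) (c, d) = 1 → c = 0 ∧ d = 0 := by
      intro c d h
      by_contra hc
      exact hK ⟨c, d, by tauto, h⟩
    have hfun : ∀ a b c d c' d', Z (a, b) (c, d) = 1 → Z (a, b) (c', d') = 1 →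
        c = c' ∧ d = d' := by
      intro a b c d c' d' h h'
      have := hlin 1 (-1) _ _ _ _ _ _ _ _ h h'
      have e1 : (1 : ZMod p) * a + -1 * a = 0 := by ring
      have e2 : (1 : ZMod p) * b + -1 * b = 0 := by ring
      rw [e1, e2] at this
      obtain ⟨k1, k2⟩ := hK' _ _ this
      exact ⟨by linear_combination k1, by linear_combination k2⟩
    let S : Finset ((ZMod p × ZMod p) × (ZMod p × ZMod p)) :=
      Finset.univ.filter fun w => Z w.1 w.2 = 1
    have hcard : S.card = p ^ 2 := by
      rw [← hsum, Finset.card_filter]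
      refine Finset.sum_congr rfl fun w _ => ?_
      have := h1 w.1 w.2
      split_ifs <;> omega
    have himg : S.image Prod.fst = Finset.univ := by
      apply Finset.eq_univ_of_card
      rw [Finset.card_image_of_injOn, hcard]
      · simp [ZMod.card, sq]
      · rintro ⟨⟨a, b⟩, ⟨c, d⟩⟩ hw ⟨⟨a', b'⟩, ⟨c', d'⟩⟩ hw' he
        simp only [S, Finset.coe_filter, Finset.mem_univ, true_and, Set.mem_ofPred_eq] at hw hw'
        simp only [Prod.mk.injEq] at he
        obtain ⟨rfl, rfl⟩ := he
        obtain ⟨rfl, rfl⟩ := hfun _ _ _ _ _ _ hw hw'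
        rfl
    have htot : ∀ a b, ∃ c d, Z (a, b) (c, d) = 1 := by
      intro a b
      have : (a, b) ∈ S.image Prod.fst := by rw [himg]; exact Finset.mem_univ _
      obtain ⟨⟨x, ⟨c, d⟩⟩, hw, he⟩ := Finset.mem_image.1 this
      simp only [S, Finset.mem_filter, Finset.mem_univ, true_and] at hw
      simp only at he
      subst he
      exact ⟨c, d, hw⟩
    obtain ⟨c1, d1, g1⟩ := htot 1 0
    obtain ⟨c2, d2, g2⟩ := htot 0 1
    have q1 := hQ _ _ _ _ g1
    have q2 := hQ _ _ _ _ g2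
    have b12 := hB _ _ _ _ _ _ _ _ g1 g2
    have hchar : ∀ a b c d, Z (a, b) (c, d) = 1 ↔ c = a * c1 + b * c2 ∧ d = a * d1 + b * d2 := by
      intro a b c d
      have := hlin a b _ _ _ _ _ _ _ _ g1 g2
      have e1 : a * 1 + b * 0 = a := by ring
      have e2 : a * 0 + b * 1 = b := by ring
      rw [e1, e2] at this
      constructor
      · intro h; exact hfun _ _ _ _ _ _ h this
      · rintro ⟨rfl, rfl⟩; exact this
    have hq1 : c1 * d1 = 0 := by simpa using q1.symm
    have hq2 : c2 * d2 = 0 := by simpa using q2.symm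
    have hb : c1 * d2 + c2 * d1 = 1 := by simpa using b12.symm
    by_cases hc1 : c1 = 0
    · subst hc1
      have hcd : c2 * d1 = 1 := by simpa using hb
      have hd2 : d2 = 0 := by
        rcases mul_eq_zero.1 hq2 with h | h
        · simp [h] at hcd
        · exact h
      refine ⟨⟨c2, d1, hcd, by rw [mul_comm]; exact hcd⟩, Or.inr (hext _ ?_ ?_)⟩
      · intro x y; unfold ZautP'; split_ifs <;> simp
      · intro a b c d
        rw [hchar]
        simp only [ZautP', ite_eq_left_iff, Prod.mk.injEq, hd2]
        simp [mul_comm]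
    · have hd1 : d1 = 0 := by simpa [hc1] using hq1
      have hcd : c1 * d2 = 1 := by simpa [hd1] using hb
      have hd2 : d2 ≠ 0 := by rintro rfl; simp at hcd
      have hc2 : c2 = 0 := by simpa [hd2] using hq2
      refine ⟨⟨c1, d2, hcd, by rw [mul_comm]; exact hcd⟩, Or.inl (hext _ ?_ ?_)⟩
      · intro x y; unfold ZautP; split_ifs <;> simp
      · intro a b c d
        rw [hchar]
        simp only [ZautP, ite_eq_left_iff, Prod.mk.injEq, hc2, hd1]
        simp [mul_comm]

lemma aut_mod (p : ℕ) [Fact p.Prime] (ℓ : (ZMod p)ˣ) : IsModInvP p (ZautP p ℓ) := by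
  classical
  refine ⟨?_, (keyT p _).2 ?_, by simp [-Units.val_inv_eq_inv_val, ZautP]⟩
  · ext x y
    have : ∀ z : ZMod p × ZMod p,
      (y = ((ℓ : ZMod p) * z.1, ((ℓ⁻¹ : (ZMod p)ˣ) : ZMod p) * z.2)) ↔
        z = (((ℓ⁻¹ : (ZMod p)ˣ) : ZMod p) * y.1, (ℓ : ZMod p) * y.2) := by
      intro z
      constructor
      · rintro rfl; simp [-Units.val_inv_eq_inv_val]
      · rintro rfl; simp [-Units.val_inv_eq_inv_val]
    simp only [Matrix.mul_apply, Matrix.of_apply, ZautP, this]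
    simp [-Units.val_inv_eq_inv_val, Sp]
    left
    congr 1
    ring
  · intro x y h
    simp only [ZautP, ne_eq, ite_eq_right_iff, one_ne_zero, imp_false, not_not] at h
    subst h
    simp only
    rw [mul_mul_mul_comm]; simp [-Units.val_inv_eq_inv_val]

lemma aut_mod' (p : ℕ) [Fact p.Prime] (ℓ : (ZMod p)ˣ) : IsModInvP p (ZautP' p ℓ) := by
  classical
  refine ⟨?_, (keyT p _).2 ?_, by simp [-Units.val_inv_eq_inv_val, ZautP']⟩
  · ext x y
    have : ∀ z : ZMod p × ZMod p,
      (y = ((ℓ : ZMod p) * z.2, ((ℓ⁻¹ : (ZMod p)ˣ) : ZMod p) * z.1)) ↔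
        z = ((ℓ : ZMod p) * y.2, ((ℓ⁻¹ : (ZMod p)ˣ) : ZMod p) * y.1) := by
      intro z
      constructor
      · rintro rfl; simp [-Units.val_inv_eq_inv_val]
      · rintro rfl; simp [-Units.val_inv_eq_inv_val]
    simp only [Matrix.mul_apply, Matrix.of_apply, ZautP', this]
    simp [-Units.val_inv_eq_inv_val, Sp]
    left
    congr 1
    ring
  · intro x y h
    simp only [ZautP', ne_eq, ite_eq_right_iff, one_ne_zero, imp_false, not_not] at h
    subst h
    simp only
    rw [mul_mul_mul_comm]; simp [-Units.val_inv_eq_inv_val, mul_comm]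

lemma line_sum (p : ℕ) [Fact p.Prime] (n : Fin 2) (y : ZMod p × ZMod p) :
    ∑ z : ZMod p × ZMod p, (if (if n = 0 then z.2 = 0 else z.1 = 0) then (1 : ℂ) else 0) * Sp p z y
      = if (if n = 0 then y.2 = 0 else y.1 = 0) then 1 else 0 := by
  have hp0 : (p : ℂ) ≠ 0 := by exact_mod_cast (Fact.out : p.Prime).ne_zero
  rw [Fintype.sum_prod_type]
  fin_cases n
  · simp [-Units.val_inv_eq_inv_val, Sp, ← Finset.mul_sum, ep_sum, hp0]
  · rw [Finset.sum_comm]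
    simp [-Units.val_inv_eq_inv_val, Sp, ← Finset.mul_sum, ep_sum', hp0]

lemma Sp_symm (p : ℕ) (x y : ZMod p × ZMod p) : Sp p x y = Sp p y x := by
  simp only [Sp]; rw [add_comm]

lemma block_mod (p : ℕ) [Fact p.Prime] (m n : Fin 2) : IsModInvP p (ZblockP p m n) := by
  classical
  refine ⟨?_, (keyT p _).2 ?_, by simp [-Units.val_inv_eq_inv_val, ZblockP]⟩
  · ext x y
    have e : ∀ x y, ((ZblockP p m n x y : ℕ) : ℂ) =
        (if (if m = 0 then x.2 = 0 else x.1 = 0) then (1 : ℂ) else 0) *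
        (if (if n = 0 then y.2 = 0 else y.1 = 0) then (1 : ℂ) else 0) := by
      intro x y
      simp only [ZblockP, ite_and]
      split_ifs <;> simp [-Units.val_inv_eq_inv_val]
    simp only [Matrix.mul_apply, Matrix.of_apply, e]
    simp only [mul_assoc, ← Finset.mul_sum, line_sum]
    simp only [← mul_assoc, ← Finset.sum_mul]
    congr 1
    rw [← line_sum]
    exact Finset.sum_congr rfl fun z _ => by rw [Sp_symm, mul_comm]
  · intro x y h
    simp only [ZblockP, ne_eq, ite_eq_right_iff, one_ne_zero, imp_false, not_not] at h
    obtain ⟨h1, h2⟩ := h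
    split_ifs at h1 h2 <;> simp [-Units.val_inv_eq_inv_val, h1, h2]

/-- Parametrization of all modular invariants. -/
def param (p : ℕ) : ((ZMod p)ˣ ⊕ (ZMod p)ˣ) ⊕ (Fin 2 × Fin 2) →
    (ZMod p × ZMod p → ZMod p × ZMod p → ℕ)
  | Sum.inl (Sum.inl l) => ZautP p l
  | Sum.inl (Sum.inr l) => ZautP' p l
  | Sum.inr (m, n) => ZblockP p m n

lemma param_inj (p : ℕ) [Fact p.Prime] : Function.Injective (param p) := by
  have hAB : ∀ l m n, ZautP p l ≠ ZblockP p m n := by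
    intro l m n h
    have h1 := congrFun (congrFun h (0, 0)) (1, 0)
    have h2 := congrFun (congrFun h (0, 0)) (0, 1)
    simp [-Units.val_inv_eq_inv_val, ZautP, ZblockP] at h1 h2
    omega
  have hAB' : ∀ l m n, ZautP' p l ≠ ZblockP p m n := by
    intro l m n h
    have h1 := congrFun (congrFun h (0, 0)) (1, 0)
    have h2 := congrFun (congrFun h (0, 0)) (0, 1)
    simp [-Units.val_inv_eq_inv_val, ZautP', ZblockP] at h1 h2
    omega
  have hAA' : ∀ l l', ZautP p l ≠ ZautP' p l' := by
    intro l l' h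
    have h1 := congrFun (congrFun h (1, 0)) ((l : ZMod p), 0)
    simp [-Units.val_inv_eq_inv_val, ZautP, ZautP'] at h1
  have hAA : ∀ l l', ZautP p l = ZautP p l' → l = l' := by
    intro l l' h
    have h1 := congrFun (congrFun h (1, 0)) ((l : ZMod p), 0)
    simp [-Units.val_inv_eq_inv_val, ZautP] at h1
    exact Units.ext h1
  have hA'A' : ∀ l l', ZautP' p l = ZautP' p l' → l = l' := by
    intro l l' h
    have h1 := congrFun (congrFun h (0, 1)) ((l : ZMod p), 0)
    simp [-Units.val_inv_eq_inv_val, ZautP'] at h1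
    exact Units.ext h1
  have hBB : ∀ m n m' n', ZblockP p m n = ZblockP p m' n' → m = m' ∧ n = n' := by
    intro m n m' n' h
    have h1 := congrFun (congrFun h (0, 0)) (1, 0)
    have h2 := congrFun (congrFun h (1, 0)) (0, 0)
    simp [-Units.val_inv_eq_inv_val, ZblockP] at h1 h2
    constructor
    · split_ifs at h2 <;> omega
    · split_ifs at h1 <;> omega
  rintro ((l | l) | ⟨m, n⟩) ((l' | l') | ⟨m', n'⟩) h <;> simp only [param] at h
  · rw [hAA _ _ h]
  · exact absurd h (hAA' _ _)
  · exact absurd h (hAB _ _ _)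
  · exact absurd h.symm (hAA' _ _)
  · rw [hA'A' _ _ h]
  · exact absurd h (hAB' _ _ _)
  · exact absurd h.symm (hAB _ _ _)
  · exact absurd h.symm (hAB' _ _ _)
  · obtain ⟨rfl, rfl⟩ := hBB _ _ _ _ h
    rfl


/-- for `p` an odd prime, the modular invariants of the double of
`Z_p` are exactly the `2p-2` automorphism invariants `Z^{(ℓ)}`, `Z'^{(ℓ)}`
(`ℓ ∈ Z_p^×`) together with the four block invariants `Z^{m,n}`; there are
exactly `2p+2` of them. -/
theorem stmt_8 (p : ℕ) [Fact p.Prime] (hp : p ≠ 2) :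
    {Z : ZMod p × ZMod p → ZMod p × ZMod p → ℕ | IsModInvP p Z}
      = {Z | (∃ ℓ : (ZMod p)ˣ, Z = ZautP p ℓ ∨ Z = ZautP' p ℓ) ∨
             (∃ m n : Fin 2, Z = ZblockP p m n)} ∧
    {Z : ZMod p × ZMod p → ZMod p × ZMod p → ℕ | IsModInvP p Z}.ncard = 2 * p + 2 := by
  have hset : {Z : ZMod p × ZMod p → ZMod p × ZMod p → ℕ | IsModInvP p Z}
      = {Z | (∃ ℓ : (ZMod p)ˣ, Z = ZautP p ℓ ∨ Z = ZautP' p ℓ) ∨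
             (∃ m n : Fin 2, Z = ZblockP p m n)} := by
    ext Z
    constructor
    · rintro ⟨hS, hT, h0⟩
      obtain ⟨h1, h2, h3⟩ := key p Z hS h0
      exact classify p Z h1 h2 h3 ((keyT p Z).1 hT)
    · rintro (⟨l, rfl | rfl⟩ | ⟨m, n, rfl⟩)
      · exact aut_mod p l
      · exact aut_mod' p l
      · exact block_mod p m n
  refine ⟨hset, ?_⟩
  have hrange : {Z : ZMod p × ZMod p → ZMod p × ZMod p → ℕ | IsModInvP p Z}
      = param p '' Set.univ := by
    rw [hset]
    ext Z
    constructor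
    · rintro (⟨l, rfl | rfl⟩ | ⟨m, n, rfl⟩)
      · exact ⟨Sum.inl (Sum.inl l), trivial, rfl⟩
      · exact ⟨Sum.inl (Sum.inr l), trivial, rfl⟩
      · exact ⟨Sum.inr (m, n), trivial, rfl⟩
    · rintro ⟨(l | l) | ⟨m, n⟩, -, rfl⟩
      · exact Or.inl ⟨l, Or.inl rfl⟩
      · exact Or.inl ⟨l, Or.inr rfl⟩
      · exact Or.inr ⟨m, n, rfl⟩
  rw [hrange, Set.ncard_image_of_injective _ (param_inj p), Set.ncard_univ,
    Nat.card_eq_fintype_card]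
  have := (Fact.out : p.Prime).two_le
  simp only [Fintype.card_sum, Fintype.card_prod, Fintype.card_fin, ZMod.card_units p]
  omega
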